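/- arXiv:math/0208219 — 3 statements merged into one kernel-verified Lean document; each statement's English description precedes it below -/
import Mathlib

section
/- If the stratum S_v is nonempty, then S_v, with its subspace topology from ℝ^n, is contractible. -/
open Polynomial

/-- The monic polynomial `P_a(x) = x^n + a_1 x^{n-1} + … + a_n`. -/
noncomputable def Ppoly (n : ℕ) (a : Fin n → ℝ) : Polynomial ℝ :=
  X ^ n + ∑ i : Fin n, C (a i) * X ^ (n - 1 - (i : ℕ))

/-- The multiplicity vector of `P_a`: the multiplicities of the distinct real
roots of `P_a`, listed in increasing order of the roots. -/
noncomputable def MV (n : ℕ) (a : Fin n → ℝ) : List ℕ :=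
  ((Ppoly n a).roots.toFinset.sort (· ≤ ·)).map fun x => (Ppoly n a).rootMultiplicity x

/-- The stratum of `ℝ^n` associated with a multiplicity vector `v`. -/
def Stratum (n : ℕ) (v : List ℕ) : Set (Fin n → ℝ) := {a | MV n a = v}

/-!
A polynomial in `S_v` is uniquely `∏ (x - xᵢ) ^ vᵢ * Q` with `x₁ < ⋯ < x_q` and `Q` monic without
real roots. For monic `Q` this means that `Q` is positive on `ℝ`, so both the admissible `(xᵢ)` and
the coefficient vectors of the admissible `Q` form convex sets. The coefficients of the product
depend continuously on `((xᵢ), Q)`, and this map is proper on the whole parameter space, because the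
coefficients of a monic polynomial bound its roots and vice versa. Among weakly increasing `(xᵢ)`, a
closed condition, only the admissible parameters are sent into `S_v`; hence the restriction to them
is a closed continuous bijection onto `S_v`, and `S_v` is homeomorphic to a convex set.
-/

section TopologyAndConvexity

lemma nonempty_homeomorph_of_bijOn_inter_preimage {E F : Type*} [TopologicalSpace E]
    [TopologicalSpace F] {f : E → F} (hf : Continuous f) (hcl : IsClosedMap f) {c : Set E}
    (hc : IsClosed c) {t : Set F} (hbij : Set.BijOn f (c ∩ f ⁻¹' t) t) :
    Nonempty (↥(c ∩ f ⁻¹' t) ≃ₜ t) := by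
  refine ⟨(hbij.equiv f).toHomeomorphOfContinuousClosed
    ((hf.comp continuous_subtype_val).subtype_mk _) fun u hu => ?_⟩
  obtain ⟨w, hw, rfl⟩ := isClosed_induced_iff.1 hu
  refine isClosed_induced_iff.2 ⟨f '' (w ∩ c), hcl _ (hw.inter hc), ?_⟩
  ext ⟨y, hy⟩
  constructor
  · rintro ⟨z, ⟨hzw, hzc⟩, rfl⟩
    exact ⟨⟨z, hzc, hy⟩, hzw, rfl⟩
  · rintro ⟨⟨z, hzc, _⟩, hzw, hzy⟩
    exact ⟨z, ⟨hzw, hzc⟩, congrArg Subtype.val hzy⟩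

lemma isProperMap_of_isBounded_norm_le {E F : Type*} [PseudoMetricSpace E] [ProperSpace E]
    [NormedAddCommGroup F] [ProperSpace F] {f : E → F} (hf : Continuous f)
    (hbdd : ∀ r, Bornology.IsBounded {z | ‖f z‖ ≤ r}) : IsProperMap f := by
  refine isProperMap_iff_isCompact_preimage.2 ⟨hf, fun K hK => ?_⟩
  obtain ⟨r, hr⟩ := hK.isBounded.exists_norm_le
  exact Metric.isCompact_of_isClosed_isBounded (hK.isClosed.preimage hf)
    ((hbdd r).subset fun z hz => hr _ hz)

lemma convex_setOf_strictMono {ι 𝕜 : Type*} [Preorder ι] [Semiring 𝕜] [PartialOrder 𝕜]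
    [IsStrictOrderedRing 𝕜] : Convex 𝕜 {x : ι → 𝕜 | StrictMono x} :=
  convex_iff_forall_pos.2 fun _ hx _ hy _ _ hs ht _ => (hx.const_mul hs).add (hy.const_mul ht)

end TopologyAndConvexity

section SortedMultiplicities

lemma toFinset_sum_nsmul_singleton {ι α : Type*} [Fintype ι] [DecidableEq α] {m : ι → ℕ}
    (hm : ∀ i, 0 < m i) (x : ι → α) :
    (∑ i, m i • ({x i} : Multiset α)).toFinset = Finset.univ.image x := by
  ext t
  simp [Multiset.mem_sum, Multiset.mem_nsmul, (hm _).ne', eq_comm]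

lemma count_sum_nsmul_singleton {ι α : Type*} [Fintype ι] [DecidableEq α] (m : ι → ℕ) {x : ι → α}
    (hx : Function.Injective x) (i : ι) :
    (∑ j, m j • ({x j} : Multiset α)).count (x i) = m i := by
  classical
  simp [Multiset.count_sum', Multiset.count_singleton, hx.eq_iff]

variable {α : Type*} [LinearOrder α] {k : ℕ} {m : Fin k → ℕ} {x : Fin k → α}

/-- The multiplicities of the distinct elements of a multiset, in increasing order of the elements;
`MV n a` is this list for the multiset of real roots of `Ppoly n a`. -/
def sortedMultiplicities (s : Multiset α) : List ℕ :=
  (s.toFinset.sort (· ≤ ·)).map s.count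

lemma length_sortedMultiplicities (s : Multiset α) :
    (sortedMultiplicities s).length = s.toFinset.card := by
  simp [sortedMultiplicities]

lemma sum_sortedMultiplicities (s : Multiset α) : (sortedMultiplicities s).sum = s.card := by
  rw [← Multiset.toFinset_sum_count_eq, Finset.sum_eq_multiset_sum,
    ← Finset.sort_eq s.toFinset (· ≤ ·), Multiset.map_coe, Multiset.sum_coe, sortedMultiplicities]

lemma sort_toFinset_sum_nsmul_singleton (hm : ∀ i, 0 < m i) (hx : StrictMono x) :
    (∑ i, m i • ({x i} : Multiset α)).toFinset.sort (· ≤ ·) = List.ofFn x := by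
  have himage : Finset.univ.image x = (List.ofFn x).toFinset := by
    ext t
    simp
  rw [toFinset_sum_nsmul_singleton hm, himage]
  exact (List.toFinset_sort _ (List.nodup_ofFn.2 hx.injective)).2
    (List.pairwise_ofFn.2 fun _ _ hij => hx.monotone hij.le)

lemma sortedMultiplicities_sum_nsmul_singleton (hm : ∀ i, 0 < m i) (hx : StrictMono x) :
    sortedMultiplicities (∑ i, m i • ({x i} : Multiset α)) = List.ofFn m := by
  rw [sortedMultiplicities, sort_toFinset_sum_nsmul_singleton hm hx, List.map_ofFn]
  exact congrArg List.ofFn (funext (count_sum_nsmul_singleton m hx.injective))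

lemma exists_strictMono_of_sortedMultiplicities_eq_ofFn {s : Multiset α}
    (hs : sortedMultiplicities s = List.ofFn m) :
    ∃ x : Fin k → α, StrictMono x ∧ s = ∑ i, m i • ({x i} : Multiset α) := by
  have hcard : s.toFinset.card = k := by
    rw [← length_sortedMultiplicities, hs, List.length_ofFn]
  let x : Fin k → α := s.toFinset.orderEmbOfFin hcard
  have hcount (i : Fin k) : s.count (x i) = m i := by
    have hget := List.getElem_of_eq hs (i := i) (by simp [length_sortedMultiplicities, hcard])
    simpa [sortedMultiplicities, x, Finset.orderEmbOfFin_apply] using hget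
  refine ⟨x, (s.toFinset.orderEmbOfFin hcard).strictMono, ?_⟩
  calc s = ∑ a ∈ s.toFinset, s.count a • {a} := s.toFinset_sum_count_nsmul_eq.symm
    _ = ∑ a ∈ Finset.univ.image x, s.count a • {a} := by
      rw [Finset.image_orderEmbOfFin_univ]
    _ = ∑ i, m i • {x i} := by
      rw [Finset.sum_image fun _ _ _ _ h => (s.toFinset.orderEmbOfFin hcard).injective h]
      exact Finset.sum_congr rfl fun i _ => by rw [hcount]

lemma sortedMultiplicities_sum_nsmul_singleton_add_eq_ofFn_iff (hm : ∀ i, 0 < m i)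
    (hx : Monotone x) {t : Multiset α} :
    sortedMultiplicities (∑ i, m i • ({x i} : Multiset α) + t) = List.ofFn m ↔
      StrictMono x ∧ t = 0 := by
  constructor
  · intro h
    have ht : t = 0 := by
      have hsum := congrArg List.sum h
      simpa [sum_sortedMultiplicities, List.sum_ofFn] using hsum
    subst ht
    have hlength := congrArg List.length h
    rw [add_zero, length_sortedMultiplicities, toFinset_sum_nsmul_singleton hm,
      List.length_ofFn] at hlength
    have hinj : Set.InjOn x (Finset.univ : Finset (Fin k)) :=
      Finset.card_image_iff.1 (by rw [hlength, Finset.card_fin])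
    exact ⟨hx.strictMono_of_injective fun i j hij => hinj (by simp) (by simp) hij, rfl⟩
  · rintro ⟨hx, rfl⟩
    rw [add_zero, sortedMultiplicities_sum_nsmul_singleton hm hx]

end SortedMultiplicities

section RootProd

variable {R ι : Type*} [CommRing R] [Fintype ι] (m : ι → ℕ)

/-- The monic polynomial with roots `x i` of prescribed multiplicities `m i` (multiplicities add up
where `x` repeats a value). -/
noncomputable def rootProd (x : ι → R) : R[X] := ∏ i, (X - C (x i)) ^ m i

lemma monic_rootProd (x : ι → R) : (rootProd m x).Monic :=
  monic_prod_of_monic _ _ fun _ _ => (monic_X_sub_C _).pow _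

lemma natDegree_rootProd [Nontrivial R] (x : ι → R) : (rootProd m x).natDegree = ∑ i, m i := by
  rw [rootProd, natDegree_prod_of_monic _ _ fun i _ => (monic_X_sub_C _).pow _]
  simp [(monic_X_sub_C _).natDegree_pow]

lemma roots_rootProd [IsDomain R] (x : ι → R) :
    (rootProd m x).roots = ∑ i, m i • ({x i} : Multiset R) := by
  rw [rootProd, roots_prod _ _ (monic_rootProd m x).ne_zero]
  simp only [roots_pow, roots_X_sub_C]
  rfl

lemma prod_X_sub_C_sum_nsmul_singleton (x : ι → R) :
    ((∑ i, m i • ({x i} : Multiset R)).map fun a => X - C a).prod = rootProd m x := by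
  rw [← Multiset.coe_mapAddMonoidHom, map_sum, Multiset.prod_sum]
  simp [rootProd, Multiset.map_nsmul, Multiset.prod_nsmul]

lemma eval_rootProd_self {m : ι → ℕ} (x : ι → R) {i : ι} (hi : 0 < m i) :
    (rootProd m x).eval (x i) = 0 := by
  rw [rootProd, eval_prod]
  exact Finset.prod_eq_zero (Finset.mem_univ i) (by simp [hi.ne'])

open scoped PowerSeries.WithPiTopology in
lemma continuous_coe_rootProd [TopologicalSpace R] [IsTopologicalRing R] :
    Continuous fun x : ι → R => (rootProd m x : PowerSeries R) := by
  simp only [rootProd, ← coeToPowerSeries.ringHom_apply, map_prod, map_pow, map_sub]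
  simp only [coeToPowerSeries.ringHom_apply, coe_X, coe_C]
  exact continuous_finsetProd _ fun i _ => (continuous_const.sub
    ((PowerSeries.WithPiTopology.continuous_C).comp (continuous_apply i))).pow _

end RootProd

section MonicPolynomials

variable {n : ℕ}

/-- The non-leading coefficients of a polynomial of degree `n`, highest first: the inverse of
`Ppoly n` on monic polynomials of degree `n`. -/
def coeffVector {R : Type*} [Semiring R] (n : ℕ) (p : R[X]) : Fin n → R :=
  fun i => p.coeff (n - 1 - i)

lemma coeff_Ppoly_of_lt (a : Fin n → ℝ) {k : ℕ} (hk : k < n) :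
    (Ppoly n a).coeff k = a ⟨n - 1 - k, by omega⟩ := by
  rw [Ppoly, coeff_add, coeff_X_pow, if_neg hk.ne, zero_add, finsetSum_coeff,
    Finset.sum_eq_single ⟨n - 1 - k, by omega⟩]
  · rw [coeff_C_mul_X_pow, if_pos (by dsimp only; omega)]
  · intro j _ hj
    rw [coeff_C_mul_X_pow, if_neg fun h => hj (Fin.ext (by dsimp only; omega))]
  · simp

lemma coeffVector_Ppoly (a : Fin n → ℝ) : coeffVector n (Ppoly n a) = a := by
  ext i
  rw [coeffVector, coeff_Ppoly_of_lt a (by omega)]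
  exact congrArg a (Fin.ext (by dsimp only; omega))

lemma degree_sum_C_mul_X_pow_lt {R : Type*} [Semiring R] (a : Fin n → R) :
    (∑ i : Fin n, C (a i) * X ^ (n - 1 - (i : ℕ)) : R[X]).degree < n := by
  refine (degree_sum_le _ _).trans_lt ((Finset.sup_lt_iff (WithBot.bot_lt_coe n)).2 fun i _ => ?_)
  exact (degree_C_mul_X_pow_le _ _).trans_lt (Nat.cast_lt.2 (by omega))

lemma monic_Ppoly (a : Fin n → ℝ) : (Ppoly n a).Monic :=
  monic_X_pow_add (degree_sum_C_mul_X_pow_lt a)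

lemma natDegree_Ppoly (a : Fin n → ℝ) : (Ppoly n a).natDegree = n := by
  rw [Ppoly, natDegree_add_eq_left_of_degree_lt, natDegree_X_pow]
  rw [degree_X_pow]
  exact degree_sum_C_mul_X_pow_lt a

lemma Ppoly_coeffVector {p : ℝ[X]} (hp : p.Monic) (hdeg : p.natDegree = n) :
    Ppoly n (coeffVector n p) = p := by
  refine (ext_iff_natDegree_le (natDegree_Ppoly _).le hdeg.le).2 fun i hi => ?_
  rcases hi.lt_or_eq with hi | rfl
  · rw [coeff_Ppoly_of_lt _ hi, coeffVector]
    congr 1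
    dsimp only
    omega
  · have hlead := (monic_Ppoly (coeffVector i p)).coeff_natDegree
    rw [natDegree_Ppoly] at hlead
    rw [hlead, ← hdeg, hp.coeff_natDegree]

lemma card_roots_Ppoly_le (a : Fin n → ℝ) : (Ppoly n a).roots.card ≤ n :=
  (card_roots' _).trans_eq (natDegree_Ppoly a)

open scoped PowerSeries.WithPiTopology in
lemma continuous_coe_Ppoly : Continuous fun a : Fin n → ℝ => (Ppoly n a : PowerSeries ℝ) := by
  simp only [Ppoly, ← coeToPowerSeries.ringHom_apply, map_add, map_sum, map_mul]
  simp only [coeToPowerSeries.ringHom_apply, coe_C]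
  exact continuous_const.add (continuous_finsetSum _ fun i _ =>
    ((PowerSeries.WithPiTopology.continuous_C).comp (continuous_apply i)).mul continuous_const)

lemma Ppoly_convex_combination (a b : Fin n → ℝ) {s t : ℝ} (hst : s + t = 1) :
    Ppoly n (s • a + t • b) = C s * Ppoly n a + C t * Ppoly n b := by
  have hX : (X ^ n : ℝ[X]) = C s * X ^ n + C t * X ^ n := by
    rw [← add_mul, ← C_add, hst, C_1, one_mul]
  simp only [Ppoly, Pi.add_apply, Pi.smul_apply, smul_eq_mul, C_add, C_mul, add_mul, mul_add,
    Finset.sum_add_distrib, Finset.mul_sum, ← mul_assoc]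
  linear_combination hX

lemma norm_lt_norm_add_one_of_aeval_Ppoly_eq_zero {K : Type*} [NormedField K] [NormedAlgebra ℝ K]
    {a : Fin n → ℝ} {z : K} (hz : aeval z (Ppoly n a) = 0) : ‖z‖ < ‖a‖ + 1 := by
  have hmonic : ((Ppoly n a).map (algebraMap ℝ K)).Monic := (monic_Ppoly a).map _
  have hroot : ((Ppoly n a).map (algebraMap ℝ K)).IsRoot z := by
    rwa [IsRoot.def, eval_map_algebraMap]
  have hbound : cauchyBound ((Ppoly n a).map (algebraMap ℝ K)) ≤ ‖a‖₊ + 1 := by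
    rw [cauchyBound, hmonic.leadingCoeff, nnnorm_one, div_one, (monic_Ppoly a).natDegree_map,
      natDegree_Ppoly]
    gcongr
    refine Finset.sup_le fun k hk => ?_
    rw [coeff_map, nnnorm_algebraMap', coeff_Ppoly_of_lt a (Finset.mem_range.1 hk)]
    exact nnnorm_le_pi_nnnorm a _
  exact_mod_cast (hroot.norm_lt_cauchyBound hmonic.ne_zero).trans_le hbound

lemma norm_le_of_forall_aeval_Ppoly_eq_zero {b : Fin n → ℝ} {r : ℝ}
    (hroots : ∀ z : ℂ, aeval z (Ppoly n b) = 0 → ‖z‖ ≤ r) :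
    ‖b‖ ≤ max r 1 ^ n * n.choose (n / 2) := by
  refine (pi_norm_le_iff_of_nonneg (by positivity)).2 fun i => ?_
  have hcoeff := coeff_bdd_of_roots_le (algebraMap ℝ ℂ) (monic_Ppoly b) (IsAlgClosed.splits _)
    (natDegree_Ppoly b).le
    (fun z hz => hroots z (by simpa [eval_map_algebraMap] using isRoot_of_mem_roots hz))
    (n - 1 - i)
  rw [coeff_map, norm_algebraMap'] at hcoeff
  rwa [← congrFun (coeffVector_Ppoly b) i]

end MonicPolynomials

section Rootless

lemma eval_pos_of_monic_of_roots_eq_zero {q : ℝ[X]} (hq : q.Monic) (hroots : q.roots = 0) (t : ℝ) :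
    0 < q.eval t := by
  by_contra! hneg
  have hnonneg : ∃ s, 0 ≤ q.eval s := by
    rcases lt_or_ge 0 q.degree with hdeg | hdeg
    · exact ((q.tendsto_atTop_of_leadingCoeff_nonneg hdeg
        (by simp [hq.leadingCoeff])).eventually_ge_atTop 0).exists
    · exact ⟨0, by simp [hq.degree_le_zero_iff_eq_one.1 hdeg]⟩
  obtain ⟨s, hs⟩ := mem_range_of_exists_le_of_exists_ge q.continuous ⟨t, hneg⟩ hnonneg
  have hmem : s ∈ q.roots := (mem_roots hq.ne_zero).2 hs
  simp [hroots] at hmem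

lemma roots_eq_zero_iff_eval_pos {q : ℝ[X]} (hq : q.Monic) :
    q.roots = 0 ↔ ∀ t, 0 < q.eval t :=
  ⟨eval_pos_of_monic_of_roots_eq_zero hq, fun hpos => Multiset.eq_zero_of_forall_notMem fun t ht =>
    (hpos t).ne' (isRoot_of_mem_roots ht)⟩

lemma convex_setOf_roots_Ppoly_eq_zero (d : ℕ) :
    Convex ℝ {b : Fin d → ℝ | (Ppoly d b).roots = 0} := by
  simp only [roots_eq_zero_iff_eval_pos (monic_Ppoly _)]
  refine convex_iff_forall_pos.2 fun b hb c hc s t hs ht hst u => ?_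
  rw [Ppoly_convex_combination b c hst]
  simpa using add_pos (mul_pos hs (hb u)) (mul_pos ht (hc u))

end Rootless

section FactorMap

variable {k : ℕ} (m : Fin k → ℕ) (d : ℕ)

/-- The coefficients of `∏ (x - xᵢ) ^ mᵢ * Q`, as a function of the roots `xᵢ` and of the
coefficients of the monic cofactor `Q` of degree `d`. -/
noncomputable def factorMap (z : (Fin k → ℝ) × (Fin d → ℝ)) : Fin (∑ i, m i + d) → ℝ :=
  coeffVector _ (rootProd m z.1 * Ppoly d z.2)

/-- The parameters of polynomials whose distinct real roots are exactly the listed ones: strictly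
increasing roots and a cofactor without real roots. -/
def factorParameters (k d : ℕ) : Set ((Fin k → ℝ) × (Fin d → ℝ)) :=
  {x | StrictMono x} ×ˢ {b | (Ppoly d b).roots = 0}

lemma convex_factorParameters (k d : ℕ) : Convex ℝ (factorParameters k d) :=
  convex_setOf_strictMono.prod (convex_setOf_roots_Ppoly_eq_zero d)

open scoped PowerSeries.WithPiTopology in
lemma continuous_factorMap : Continuous (factorMap m d) := by
  have hprod : Continuous fun z : (Fin k → ℝ) × (Fin d → ℝ) =>
      ((rootProd m z.1 * Ppoly d z.2 : ℝ[X]) : PowerSeries ℝ) := by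
    simp only [coe_mul]
    exact ((continuous_coe_rootProd m).comp continuous_fst).mul
      (continuous_coe_Ppoly.comp continuous_snd)
  refine continuous_pi fun i => ?_
  simp only [factorMap, coeffVector, ← coeff_coe]
  exact (PowerSeries.WithPiTopology.continuous_coeff ℝ _).comp hprod

lemma Ppoly_factorMap (z : (Fin k → ℝ) × (Fin d → ℝ)) :
    Ppoly _ (factorMap m d z) = rootProd m z.1 * Ppoly d z.2 := by
  refine Ppoly_coeffVector ((monic_rootProd _ _).mul (monic_Ppoly _)) ?_
  rw [(monic_rootProd _ _).natDegree_mul (monic_Ppoly _), natDegree_rootProd, natDegree_Ppoly]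

lemma roots_Ppoly_factorMap (z : (Fin k → ℝ) × (Fin d → ℝ)) :
    (Ppoly _ (factorMap m d z)).roots =
      ∑ i, m i • ({z.1 i} : Multiset ℝ) + (Ppoly d z.2).roots := by
  rw [Ppoly_factorMap, roots_mul ((monic_rootProd _ _).mul (monic_Ppoly _)).ne_zero,
    roots_rootProd]

variable {m} {d}

lemma norm_fst_le_norm_factorMap_add_one (hm : ∀ i, 0 < m i) (z : (Fin k → ℝ) × (Fin d → ℝ)) :
    ‖z.1‖ ≤ ‖factorMap m d z‖ + 1 := by
  refine (pi_norm_le_iff_of_nonneg (by positivity)).2 fun i =>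
    (norm_lt_norm_add_one_of_aeval_Ppoly_eq_zero ?_).le
  rw [Ppoly_factorMap, map_mul, coe_aeval_eq_eval, eval_rootProd_self _ (hm i), zero_mul]

lemma norm_snd_le_of_norm_factorMap_le {z : (Fin k → ℝ) × (Fin d → ℝ)} {r : ℝ}
    (hr : ‖factorMap m d z‖ ≤ r) : ‖z.2‖ ≤ max (r + 1) 1 ^ d * d.choose (d / 2) := by
  refine norm_le_of_forall_aeval_Ppoly_eq_zero fun w hw => ?_
  have hroot : aeval w (Ppoly _ (factorMap m d z)) = 0 := by
    rw [Ppoly_factorMap, map_mul, hw, mul_zero]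
  linarith [norm_lt_norm_add_one_of_aeval_Ppoly_eq_zero hroot]

lemma isProperMap_factorMap (hm : ∀ i, 0 < m i) : IsProperMap (factorMap m d) := by
  refine isProperMap_of_isBounded_norm_le (continuous_factorMap m d) fun r =>
    isBounded_iff_forall_norm_le.2
      ⟨max (r + 1) (max (r + 1) 1 ^ d * d.choose (d / 2)), fun z hz => max_le_max ?_ ?_⟩
  · exact (norm_fst_le_norm_factorMap_add_one hm z).trans (add_le_add_left hz 1)
  · exact norm_snd_le_of_norm_factorMap_le hz

end FactorMap

section Stratum

variable {n k d : ℕ} {m : Fin k → ℕ}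

lemma MV_eq_sortedMultiplicities (a : Fin n → ℝ) :
    MV n a = sortedMultiplicities (Ppoly n a).roots := by
  simp only [MV, sortedMultiplicities, count_roots]

lemma sum_le_of_stratum_nonempty {v : List ℕ} (hne : (Stratum n v).Nonempty) : v.sum ≤ n := by
  obtain ⟨a, rfl⟩ := hne
  rw [MV_eq_sortedMultiplicities, sum_sortedMultiplicities]
  exact card_roots_Ppoly_le a

lemma factorParameters_eq_inter_preimage (hm : ∀ i, 0 < m i) :
    factorParameters k d =
      {z | Monotone z.1} ∩ factorMap m d ⁻¹' Stratum (∑ i, m i + d) (List.ofFn m) := by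
  have hmem {z : (Fin k → ℝ) × (Fin d → ℝ)} (hz : Monotone z.1) :
      factorMap m d z ∈ Stratum (∑ i, m i + d) (List.ofFn m) ↔ z ∈ factorParameters k d := by
    rw [Stratum, Set.mem_ofPred_eq, MV_eq_sortedMultiplicities, roots_Ppoly_factorMap,
      sortedMultiplicities_sum_nsmul_singleton_add_eq_ofFn_iff hm hz]
    rfl
  ext z
  exact ⟨fun hz => ⟨hz.1.monotone, (hmem hz.1.monotone).2 hz⟩, fun hz => (hmem hz.1).1 hz.2⟩

lemma injOn_factorMap (hm : ∀ i, 0 < m i) : Set.InjOn (factorMap m d) (factorParameters k d) := by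
  rintro ⟨x, b⟩ ⟨hx, hb⟩ ⟨y, c⟩ ⟨hy, hc⟩ h
  have hxy : x = y := by
    have hroots := congrArg (fun a => (Ppoly _ a).roots.toFinset.sort (· ≤ ·)) h
    simp only [roots_Ppoly_factorMap] at hroots
    rw [hb, hc, add_zero, add_zero, sort_toFinset_sum_nsmul_singleton hm hx,
      sort_toFinset_sum_nsmul_singleton hm hy] at hroots
    exact List.ofFn_injective hroots
  subst hxy
  have hpoly : rootProd m x * Ppoly d b = rootProd m x * Ppoly d c := by
    simpa only [Ppoly_factorMap] using congrArg (Ppoly _) h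
  rw [← coeffVector_Ppoly b, mul_left_cancel₀ (monic_rootProd m x).ne_zero hpoly,
    coeffVector_Ppoly]

lemma surjOn_factorMap : Set.SurjOn (factorMap m d) (factorParameters k d)
    (Stratum (∑ i, m i + d) (List.ofFn m)) := by
  intro a ha
  rw [Stratum, Set.mem_ofPred_eq, MV_eq_sortedMultiplicities] at ha
  obtain ⟨x, hx, hroots⟩ := exists_strictMono_of_sortedMultiplicities_eq_ofFn ha
  obtain ⟨q, hfactor, hdeg, hq⟩ := exists_prod_multiset_X_sub_C_mul (Ppoly _ a)
  rw [hroots, prod_X_sub_C_sum_nsmul_singleton] at hfactor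
  have hqmonic : q.Monic := (monic_rootProd m x).of_mul_monic_left (hfactor ▸ monic_Ppoly a)
  have hqdeg : q.natDegree = d := by
    simpa [hroots, natDegree_Ppoly] using hdeg
  have hPpoly : Ppoly d (coeffVector d q) = q := Ppoly_coeffVector hqmonic hqdeg
  refine ⟨(x, coeffVector d q), ⟨hx, ?_⟩, ?_⟩
  · rwa [Set.mem_ofPred_eq, hPpoly]
  · rw [factorMap, hPpoly, hfactor, coeffVector_Ppoly]

lemma nonempty_homeomorph_factorParameters_stratum (hm : ∀ i, 0 < m i) :
    Nonempty (factorParameters k d ≃ₜ Stratum (∑ i, m i + d) (List.ofFn m)) := by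
  have heq := factorParameters_eq_inter_preimage (d := d) hm
  have hbij : Set.BijOn (factorMap m d) (factorParameters k d) (Stratum _ (List.ofFn m)) :=
    ⟨fun z hz => (heq ▸ hz).2, injOn_factorMap hm, surjOn_factorMap⟩
  rw [heq] at hbij ⊢
  exact nonempty_homeomorph_of_bijOn_inter_preimage (continuous_factorMap m d)
    (isProperMap_factorMap hm).isClosedMap
    (isClosed_monotone.preimage continuous_fst) hbij

end Stratum

/-- If the stratum `S_v` is nonempty, then `S_v`, with its subspace topology
from `ℝ^n`, is contractible. -/
theorem stratum_contractible (n : ℕ) (hn : 1 ≤ n) (v : List ℕ)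
    (hv : ∀ m ∈ v, 0 < m) (hne : (Stratum n v).Nonempty) :
    ContractibleSpace (Stratum n v) := by
  obtain ⟨k, m, rfl⟩ : ∃ (k : ℕ) (m : Fin k → ℕ), v = List.ofFn m :=
    ⟨v.length, v.get, (List.ofFn_get v).symm⟩
  have hm : ∀ i, 0 < m i := fun i => hv _ (List.mem_ofFn.2 ⟨i, rfl⟩)
  have hle : ∑ i, m i ≤ n := List.sum_ofFn (f := m) ▸ sum_le_of_stratum_nonempty hne
  obtain ⟨d, rfl⟩ := Nat.exists_eq_add_of_le hle
  obtain ⟨e⟩ := nonempty_homeomorph_factorParameters_stratum (d := d) hm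
  have hparam : (factorParameters k d).Nonempty := surjOn_factorMap.comap_nonempty hne
  have := (convex_factorParameters k d).contractibleSpace hparam
  exact e.symm.contractibleSpace
end

section
/- Let P, P_1, …, P_m be monic real polynomials with P = P_1 P_2 ⋯ P_m and such that P_i and P_j have no complex root in common for i ≠ j (equivalently, the P_i are pairwise coprime). Identifying the set of monic real polynomials of degree d with ℝ^d via the non-leading coefficients, there exist open neighbourhoods U of P and U_i of P_i (i = 1,…,m) such that the product map U_1 × ⋯ × U_m → U, (Q_1,…,Q_m) ↦ Q_1 Q_2 ⋯ Q_m, is a C-infinity diffeomorphism. -/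
open Polynomial

/-- The monic polynomial of degree `d` with non-leading coefficients
`c = (c_1, …, c_d)`: `x^d + c_1 x^{d-1} + … + c_d`. -/
noncomputable def toPoly (d : ℕ) (c : Fin d → ℝ) : Polynomial ℝ :=
  X ^ d + ∑ j : Fin d, C (c j) * X ^ (d - 1 - (j : ℕ))

/-- The vector of non-leading coefficients `(c_1, …, c_d)` of a monic
polynomial of degree `d`, where `c_j` is the coefficient of `x^{d-j}`. -/
noncomputable def coeffVec (d : ℕ) (P : Polynomial ℝ) : Fin d → ℝ :=
  fun j => P.coeff (d - 1 - (j : ℕ))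

/-!
Write `F` for the map taking the coefficients of the factors to those of their product. Its
derivative at `(P_1, …, P_m)` in a direction `(H_1, …, H_m)`, `deg H_i < deg P_i`, is
`∑ i, (∏ j ≠ i, P_j) H_i`. If this sum vanishes, then reducing it modulo `P_i` shows that `P_i`
divides `(∏ j ≠ i, P_j) H_i`, hence `H_i` by coprimality, and so `H_i = 0` by degree. The derivative
is therefore injective between spaces of the same dimension `∑ i, deg P_i`, and the inverse function
theorem applies.
-/

open Function Set
open scoped ContDiff

section Coefficients

variable {R : Type*}

section Semiring

variable [Semiring R]

/-- The polynomial of degree less than `d` with coefficients `c`, listed from `X ^ (d - 1)` down to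
the constant one. These polynomials form the tangent space of the monic ones of degree `d`. -/
noncomputable def lowerPart (d : ℕ) : (Fin d → R) →ₗ[R] R[X] where
  toFun c := ∑ j : Fin d, C (c j) * X ^ (d - 1 - (j : ℕ))
  map_add' c c' := by simp only [Pi.add_apply, C_add, add_mul, Finset.sum_add_distrib]
  map_smul' r c := by
    simp only [Pi.smul_apply, smul_eq_mul, C_mul, mul_assoc, smul_eq_C_mul, Finset.mul_sum,
      RingHom.id_apply]

/-- The monic polynomial of degree `d` with non-leading coefficients `c`: `toPoly` over an arbitrary
semiring. -/
noncomputable def monicOfCoeffs (d : ℕ) (c : Fin d → R) : R[X] :=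
  X ^ d + lowerPart d c

/-- The coefficients of `P` below `X ^ d`, listed as in `lowerPart`: `coeffVec` over an arbitrary
semiring. -/
def lowerCoeffs (d : ℕ) (P : R[X]) : Fin d → R :=
  fun j => P.coeff (d - 1 - (j : ℕ))

variable {d : ℕ}

lemma coeff_lowerPart (c : Fin d → R) (n : ℕ) :
    (lowerPart d c).coeff n = ∑ j : Fin d, if n = d - 1 - (j : ℕ) then c j else 0 := by
  simp [lowerPart, coeff_X_pow]

lemma lowerCoeffs_lowerPart (c : Fin d → R) : lowerCoeffs d (lowerPart d c) = c := by
  funext j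
  have index_eq_iff (k : Fin d) : d - 1 - (j : ℕ) = d - 1 - (k : ℕ) ↔ j = k := by omega
  simp [lowerCoeffs, coeff_lowerPart, index_eq_iff]

lemma lowerPart_injective : Injective (lowerPart d : (Fin d → R) → R[X]) :=
  LeftInverse.injective lowerCoeffs_lowerPart

lemma degree_lowerPart_lt (c : Fin d → R) : (lowerPart d c).degree < d := by
  rw [degree_lt_iff_coeff_zero]
  intro n hn
  rw [coeff_lowerPart]
  exact Finset.sum_eq_zero fun j _ => if_neg (by omega)

lemma monic_monicOfCoeffs (c : Fin d → R) : (monicOfCoeffs d c).Monic :=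
  monic_X_pow_add (degree_lowerPart_lt c)

lemma degree_monicOfCoeffs [Nontrivial R] (c : Fin d → R) : (monicOfCoeffs d c).degree = d := by
  rw [monicOfCoeffs, degree_add_eq_left_of_degree_lt, degree_X_pow]
  simpa only [degree_X_pow] using degree_lowerPart_lt c

lemma monicOfCoeffs_lowerCoeffs {P : R[X]} (hP : P.Monic) (hd : P.natDegree = d) :
    monicOfCoeffs d (lowerCoeffs d P) = P := by
  subst hd
  conv_rhs => rw [hP.as_sum, ← Finset.sum_range_reflect, Finset.sum_range]
  rfl

end Semiring

variable [CommSemiring R] {ι : Type*} [Fintype ι]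

/-- The multiplication of monic polynomials of degrees `d i`, in terms of their non-leading
coefficients. -/
noncomputable def prodCoeffs (d : ι → ℕ) (c : ∀ i, Fin (d i) → R) : Fin (∑ i, d i) → R :=
  lowerCoeffs (∑ i, d i) (∏ i, monicOfCoeffs (d i) (c i))

lemma monicOfCoeffs_prodCoeffs [Nontrivial R] (d : ι → ℕ) (c : ∀ i, Fin (d i) → R) :
    monicOfCoeffs (∑ i, d i) (prodCoeffs d c) = ∏ i, monicOfCoeffs (d i) (c i) := by
  have factor_monic (i : ι) : (monicOfCoeffs (d i) (c i)).Monic := monic_monicOfCoeffs (c i)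
  refine monicOfCoeffs_lowerCoeffs (monic_prod_of_monic _ _ fun i _ => factor_monic i) ?_
  rw [natDegree_prod_of_monic _ _ fun i _ => factor_monic i]
  exact Finset.sum_congr rfl fun i _ => natDegree_eq_of_degree_eq_some (degree_monicOfCoeffs (c i))

end Coefficients

section Coprime

variable {ι : Type*} [Fintype ι] [DecidableEq ι]

lemma dvd_of_sum_prod_erase_mul_eq_zero {R : Type*} [CommRing R] {p h : ι → R}
    (hcop : Pairwise (IsCoprime on p)) (hsum : ∑ i, (∏ j ∈ Finset.univ.erase i, p j) * h i = 0)
    (i : ι) : p i ∣ h i := by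
  have dvd_other_terms :
      p i ∣ ∑ k ∈ Finset.univ.erase i, (∏ j ∈ Finset.univ.erase k, p j) * h k :=
    Finset.dvd_sum fun k hk => Dvd.dvd.mul_right (Finset.dvd_prod_of_mem p
      (Finset.mem_erase.2 ⟨(Finset.ne_of_mem_erase hk).symm, Finset.mem_univ i⟩)) _
  have dvd_term : p i ∣ (∏ j ∈ Finset.univ.erase i, p j) * h i := by
    rw [← Finset.add_sum_erase _ _ (Finset.mem_univ i)] at hsum
    rw [eq_neg_of_add_eq_zero_left hsum]
    exact dvd_other_terms.neg_right
  have coprime_prod : IsCoprime (p i) (∏ j ∈ Finset.univ.erase i, p j) :=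
    IsCoprime.prod_right fun j hj => hcop (Finset.ne_of_mem_erase hj).symm
  exact coprime_prod.dvd_of_dvd_mul_left dvd_term

lemma eq_zero_of_sum_prod_erase_mul_eq_zero {R : Type*} [CommRing R] [NoZeroDivisors R]
    {P H : ι → R[X]} (hcop : Pairwise (IsCoprime on P)) (hdeg : ∀ i, (H i).degree < (P i).degree)
    (hsum : ∑ i, (∏ j ∈ Finset.univ.erase i, P j) * H i = 0) (i : ι) : H i = 0 :=
  eq_zero_of_dvd_of_degree_lt (dvd_of_sum_prod_erase_mul_eq_zero hcop hsum i) (hdeg i)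

end Coprime

section Derivative

variable {𝕜 : Type*} [NontriviallyNormedField 𝕜] {ι : Type*}

lemma contDiff_coeff_prod {E : Type*} [NormedAddCommGroup E] [NormedSpace 𝕜 E] {n : WithTop ℕ∞}
    (s : Finset ι) {p : ι → E → 𝕜[X]} (hp : ∀ i k, ContDiff 𝕜 n fun x => (p i x).coeff k) (k : ℕ) :
    ContDiff 𝕜 n fun x => (∏ i ∈ s, p i x).coeff k := by
  classical
  induction s using Finset.induction_on generalizing k with
  | empty => simpa only [Finset.prod_empty] using contDiff_const
  | insert a s ha ih =>
    simp only [Finset.prod_insert ha, coeff_mul]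
    exact ContDiff.sum fun kl _ => (hp a kl.1).mul (ih kl.2)

lemma contDiff_coeff_monicOfCoeffs {d : ℕ} {n : WithTop ℕ∞} (k : ℕ) :
    ContDiff 𝕜 n fun c : Fin d → 𝕜 => (monicOfCoeffs d c).coeff k := by
  have contDiff_coeff_lowerPart : ContDiff 𝕜 n fun c : Fin d → 𝕜 => (lowerPart d c).coeff k :=
    ContinuousLinearMap.contDiff ⟨lcoeff 𝕜 k ∘ₗ lowerPart d, LinearMap.continuous_on_pi _⟩
  simpa only [monicOfCoeffs, coeff_add] using contDiff_const.add contDiff_coeff_lowerPart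

/-- The value of `lowerPart d c` at `x`, as a continuous linear form in `c`. It is the derivative of
the value at `x` of the monic polynomial with coefficients `c`. -/
noncomputable def evalLowerPart (d : ℕ) (x : 𝕜) : (Fin d → 𝕜) →L[𝕜] 𝕜 :=
  ⟨leval x ∘ₗ lowerPart d, LinearMap.continuous_on_pi _⟩

lemma hasFDerivAt_eval_monicOfCoeffs {d : ℕ} (x : 𝕜) (c : Fin d → 𝕜) :
    HasFDerivAt (fun c => (monicOfCoeffs d c).eval x) (evalLowerPart d x) c := by
  simp only [monicOfCoeffs, eval_add]
  exact (evalLowerPart d x).hasFDerivAt.const_add _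

variable [Fintype ι]

lemma contDiff_prodCoeffs (d : ι → ℕ) {n : WithTop ℕ∞} :
    ContDiff 𝕜 n (prodCoeffs d : (∀ i, Fin (d i) → 𝕜) → _) := by
  have contDiff_coeff_factor (i : ι) (k : ℕ) :
      ContDiff 𝕜 n fun c : ∀ i, Fin (d i) → 𝕜 => (monicOfCoeffs (d i) (c i)).coeff k :=
    (contDiff_coeff_monicOfCoeffs k).fun_comp (contDiff_pi.1 contDiff_id i)
  exact contDiff_pi.2 fun j => contDiff_coeff_prod _ contDiff_coeff_factor _

variable {d : ι → ℕ}

lemma lowerPart_fderiv_prodCoeffs [DecidableEq ι] (c h : ∀ i, Fin (d i) → 𝕜) :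
    lowerPart (∑ i, d i) (fderiv 𝕜 (prodCoeffs d) c h) =
      ∑ i, (∏ j ∈ Finset.univ.erase i, monicOfCoeffs (d j) (c j)) * lowerPart (d i) (h i) := by
  -- The values at `x` agree, being the derivatives of both sides of `(∏ i, P i)(x) = ∏ i, P i (x)`.
  refine Polynomial.funext fun x => ?_
  have differentiableAt_prodCoeffs : DifferentiableAt 𝕜 (prodCoeffs d) c :=
    (contDiff_prodCoeffs d).differentiable one_ne_zero c
  have hasFDerivAt_eval_prod :
      HasFDerivAt (fun c => (∏ i, monicOfCoeffs (d i) (c i)).eval x)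
        (evalLowerPart _ x ∘L fderiv 𝕜 (prodCoeffs d) c) c := by
    simp only [← monicOfCoeffs_prodCoeffs]
    exact (hasFDerivAt_eval_monicOfCoeffs x _).comp c differentiableAt_prodCoeffs.hasFDerivAt
  have hasFDerivAt_prod_eval :
      HasFDerivAt (fun c => (∏ i, monicOfCoeffs (d i) (c i)).eval x)
        (∑ i, (∏ j ∈ Finset.univ.erase i, (monicOfCoeffs (d j) (c j)).eval x) •
          (evalLowerPart (d i) x ∘L ContinuousLinearMap.proj i)) c := by
    simp only [eval_prod]
    exact HasFDerivAt.finsetProd fun i _ => HasFDerivAt.comp c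
      (g := fun b => (monicOfCoeffs (d i) b).eval x) (hasFDerivAt_eval_monicOfCoeffs x (c i))
      (hasFDerivAt_apply i c)
  have eval_eq := DFunLike.congr_fun (hasFDerivAt_eval_prod.unique hasFDerivAt_prod_eval) h
  simpa [evalLowerPart, eval_finsetSum, eval_prod] using eval_eq

lemma fderiv_prodCoeffs_injective {c : ∀ i, Fin (d i) → 𝕜}
    (hcop : Pairwise (IsCoprime on fun i => monicOfCoeffs (d i) (c i))) :
    Injective (fderiv 𝕜 (prodCoeffs d) c) := by
  classical
  refine (injective_iff_map_eq_zero _).2 fun h hh => ?_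
  have sum_eq_zero := lowerPart_fderiv_prodCoeffs c h
  rw [hh, map_zero, eq_comm] at sum_eq_zero
  have lowerPart_eq_zero (i : ι) : lowerPart (d i) (h i) = 0 :=
    eq_zero_of_sum_prod_erase_mul_eq_zero hcop
      (fun i => (degree_lowerPart_lt (h i)).trans_eq (degree_monicOfCoeffs (c i)).symm)
      sum_eq_zero i
  exact funext fun i => (map_eq_zero_iff _ lowerPart_injective).1 (lowerPart_eq_zero i)

lemma isInvertible_of_injective_of_finrank_eq [CompleteSpace 𝕜] {E G : Type*}
    [NormedAddCommGroup E] [NormedSpace 𝕜 E] [FiniteDimensional 𝕜 E]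
    [NormedAddCommGroup G] [NormedSpace 𝕜 G] [FiniteDimensional 𝕜 G] {f : E →L[𝕜] G}
    (hf : Injective f) (hrank : Module.finrank 𝕜 E = Module.finrank 𝕜 G) : f.IsInvertible :=
  ⟨(LinearEquiv.ofInjectiveOfFinrankEq f.toLinearMap hf hrank).toContinuousLinearEquiv, rfl⟩

lemma isInvertible_fderiv_prodCoeffs [CompleteSpace 𝕜] {c : ∀ i, Fin (d i) → 𝕜}
    (hcop : Pairwise (IsCoprime on fun i => monicOfCoeffs (d i) (c i))) :
    (fderiv 𝕜 (prodCoeffs d) c).IsInvertible :=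
  isInvertible_of_injective_of_finrank_eq (fderiv_prodCoeffs_injective hcop)
    (by simp [Module.finrank_pi_fintype])

end Derivative

section InverseFunction

variable {𝕜 : Type*} [RCLike 𝕜] {G : Type*} [NormedAddCommGroup G] [NormedSpace 𝕜 G]
  {n : WithTop ℕ∞}

lemma exists_openPartialHomeomorph_contDiffOn {E : Type*} [NormedAddCommGroup E] [NormedSpace 𝕜 E]
    [CompleteSpace E] {f : E → G} {a : E} (hf : ContDiffAt 𝕜 n f a)
    (hf' : (fderiv 𝕜 f a).IsInvertible) (hn : n ≠ 0) (hn_top : n ≠ ∞) :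
    ∃ e : OpenPartialHomeomorph E G, a ∈ e.source ∧ ⇑e = f ∧
      ContDiffOn 𝕜 n e e.source ∧ ContDiffOn 𝕜 n e.symm e.target := by
  obtain ⟨f', hf'⟩ := hf'
  have hasFDerivAt_f : HasFDerivAt f (f' : E →L[𝕜] G) a :=
    hf' ▸ (hf.differentiableAt hn).hasFDerivAt
  let e := hf.toOpenPartialHomeomorph f hasFDerivAt_f hn
  exact ⟨e.restrContDiff 𝕜 n hn_top,
    ⟨hf.mem_toOpenPartialHomeomorph_source hasFDerivAt_f hn, hf,
      hf.to_localInverse hasFDerivAt_f hn⟩,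
    rfl, e.contDiffOn_restrContDiff_source 𝕜 hn_top, e.contDiffOn_restrContDiff_target 𝕜 hn_top⟩

lemma exists_openPartialHomeomorph_source_eq_pi {ι : Type*} [Fintype ι] {E : ι → Type*}
    [∀ i, NormedAddCommGroup (E i)] [∀ i, NormedSpace 𝕜 (E i)] [∀ i, CompleteSpace (E i)]
    {f : (∀ i, E i) → G} {a : ∀ i, E i} (hf : ContDiffAt 𝕜 n f a)
    (hf' : (fderiv 𝕜 f a).IsInvertible) (hn : n ≠ 0) (hn_top : n ≠ ∞) :
    ∃ (u : ∀ i, Set (E i)) (e : OpenPartialHomeomorph (∀ i, E i) G),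
      (∀ i, IsOpen (u i) ∧ a i ∈ u i) ∧ e.source = univ.pi u ∧ ⇑e = f ∧
      ContDiffOn 𝕜 n e e.source ∧ ContDiffOn 𝕜 n e.symm e.target := by
  obtain ⟨e, ha, he, contDiffOn_e, contDiffOn_symm⟩ :=
    exists_openPartialHomeomorph_contDiffOn hf hf' hn hn_top
  obtain ⟨u, hu, u_subset⟩ := isOpen_pi_iff'.1 e.open_source a ha
  have isOpen_pi : IsOpen (univ.pi u) := isOpen_set_pi finite_univ fun i _ => (hu i).1
  exact ⟨u, e.restrOpen (univ.pi u) isOpen_pi, hu,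
    (e.restrOpen_source _ _).trans (inter_eq_right.2 u_subset), he,
    contDiffOn_e.mono inter_subset_left, contDiffOn_symm.mono inter_subset_left⟩

end InverseFunction

theorem product_map_local_diffeo_general {𝕜 : Type*} [RCLike 𝕜] {ι : Type*} [Fintype ι]
    {P : ι → 𝕜[X]} (hmonic : ∀ i, (P i).Monic) (hcop : Pairwise (IsCoprime on P))
    {d : ι → ℕ} (hd : ∀ i, (P i).natDegree = d i) :
    ∃ (U : Set (Fin (∑ i, d i) → 𝕜)) (Ui : ∀ i, Set (Fin (d i) → 𝕜)),
      IsOpen U ∧ (∀ i, IsOpen (Ui i)) ∧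
      lowerCoeffs (∑ i, d i) (∏ i, P i) ∈ U ∧ (∀ i, lowerCoeffs (d i) (P i) ∈ Ui i) ∧
      ∃ e : PartialHomeomorph (∀ i, Fin (d i) → 𝕜) (Fin (∑ i, d i) → 𝕜),
        e.source = {c | ∀ i, c i ∈ Ui i} ∧ e.target = U ∧
        (∀ c ∈ e.source, e c = prodCoeffs d c) ∧
        ContDiffOn 𝕜 ω e e.source ∧ ContDiffOn 𝕜 ω e.symm e.target := by
  let a : ∀ i, Fin (d i) → 𝕜 := fun i => lowerCoeffs (d i) (P i)
  have monicOfCoeffs_a : (fun i => monicOfCoeffs (d i) (a i)) = P :=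
    funext fun i => monicOfCoeffs_lowerCoeffs (hmonic i) (hd i)
  obtain ⟨Ui, e, hUi, e_source, e_eq, contDiffOn_e, contDiffOn_symm⟩ :=
    exists_openPartialHomeomorph_source_eq_pi (n := ω) (a := a)
      (contDiff_prodCoeffs d).contDiffAt
      (isInvertible_fderiv_prodCoeffs (monicOfCoeffs_a.symm ▸ hcop)) (by simp) (by simp)
  have a_mem_source : a ∈ e.source := e_source ▸ fun i _ => (hUi i).2
  have e_a : e a = lowerCoeffs (∑ i, d i) (∏ i, P i) := by
    rw [e_eq, ← monicOfCoeffs_a, prodCoeffs]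
  exact ⟨e.target, Ui, e.open_target, fun i => (hUi i).1, e_a ▸ e.map_source a_mem_source,
    fun i => (hUi i).2, e.toPartialHomeomorph, e_source.trans (by ext; simp), rfl,
    fun c _ => congrFun e_eq c, contDiffOn_e, contDiffOn_symm⟩

/-- Let `P_1, …, P_m` be monic real polynomials, pairwise without common complex
root (i.e. pairwise coprime), and `P = P_1 ⋯ P_m`.  Identifying monic
polynomials of degree `d` with `ℝ^d` via their non-leading coefficients, there
are open neighbourhoods `U` of `P` and `U_i` of `P_i` such that the product map
`U_1 × ⋯ × U_m → U` is a `C^∞` diffeomorphism. -/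
theorem product_map_local_diffeo (m : ℕ) (hm : 1 ≤ m) (P : Fin m → Polynomial ℝ)
    (hmonic : ∀ i, (P i).Monic)
    (hcop : ∀ i j, i ≠ j → IsCoprime (P i) (P j))
    (d : Fin m → ℕ) (hd : ∀ i, (P i).natDegree = d i) :
    ∃ (U : Set (Fin (∑ i, d i) → ℝ)) (Ui : (i : Fin m) → Set (Fin (d i) → ℝ)),
      IsOpen U ∧ (∀ i, IsOpen (Ui i)) ∧
      coeffVec (∑ i, d i) (∏ i, P i) ∈ U ∧ (∀ i, coeffVec (d i) (P i) ∈ Ui i) ∧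
      ∃ e : PartialHomeomorph ((i : Fin m) → (Fin (d i) → ℝ)) (Fin (∑ i, d i) → ℝ),
        e.source = {c | ∀ i, c i ∈ Ui i} ∧ e.target = U ∧
        (∀ c ∈ e.source, e c = coeffVec (∑ i, d i) (∏ i, toPoly (d i) (c i))) ∧
        ContDiffOn ℝ (⊤ : ℕ∞) e e.source ∧ ContDiffOn ℝ (⊤ : ℕ∞) e.symm e.target := by
  obtain ⟨U, Ui, hU, hUi, hPU, hPUi, e, he_source, he_target, he, contDiffOn_e, contDiffOn_symm⟩ :=
    product_map_local_diffeo_general hmonic hcop hd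
  exact ⟨U, Ui, hU, hUi, hPU, hPUi, e, he_source, he_target, he, contDiffOn_e.of_le le_top,
    contDiffOn_symm.of_le le_top⟩
end

section
/- Let N ≥ 2, let x_1,…,x_N and m_1,…,m_N be real numbers, and let M be the N×N matrix with entries M_{j,i} = j · m_i · x_i^{j−1}. Denote by A_{u,i} = (−1)^{u+i} times the (u,i) minor of M its (u,i) cofactor. If μ ≠ ν and x_μ = x_ν, then for every u with 1 ≤ u ≤ N one has m_μ · A_{u,μ} + m_ν · A_{u,ν} = 0, and, provided m_μ and m_ν are nonzero, A_{u,i} = 0 for all i ∉ {μ, ν}. -/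
/-- The `(u,i)` cofactor of an `N × N` matrix (`N = N' + 2`): `(−1)^{u+i}` times
the determinant of the matrix obtained by deleting row `u` and column `i`. -/
noncomputable def cofactor {N' : ℕ} (M : Matrix (Fin (N' + 2)) (Fin (N' + 2)) ℝ)
    (u i : Fin (N' + 2)) : ℝ :=
  (-1 : ℝ) ^ ((u : ℕ) + (i : ℕ)) * (M.submatrix u.succAbove i.succAbove).det

theorem col_updateRow {m n α : Type*} [DecidableEq m] (A : Matrix m n α) (i : m) (r : n → α)
    (k : n) : (A.updateRow i r).col k = Function.update (A.col k) i (r k) := by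
  ext j
  simp only [Matrix.col_apply, Matrix.updateRow_apply, Function.update_apply]

section ProportionalColumns

variable {n R : Type*} [Fintype n] [DecidableEq n] [CommRing R]
  {A : Matrix n n R} {a b : R} {c : n → R} {μ ν : n}

theorem det_eq_mul_det_updateCol_of_col_eq_smul (hμ : A.col μ = a • c) :
    A.det = a * (A.updateCol μ c).det := by
  rw [← Matrix.det_updateCol_smul, ← hμ]
  exact congrArg Matrix.det (A.updateCol_eq_self μ).symm

theorem det_eq_zero_of_col_eq_smul (hμν : μ ≠ ν) (hμ : A.col μ = a • c) (hν : A.col ν = b • c) :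
    A.det = 0 := by
  have hν' : (A.updateCol μ c).col ν = b • c := by
    rw [← hν]
    exact funext fun j => Matrix.updateCol_ne hμν.symm
  have hdet : ((A.updateCol μ c).updateCol ν c).det = 0 :=
    Matrix.det_zero_of_column_eq hμν fun j => by simp [hμν]
  rw [det_eq_mul_det_updateCol_of_col_eq_smul hμ, det_eq_mul_det_updateCol_of_col_eq_smul hν',
    hdet, mul_zero, mul_zero]

theorem det_updateRow_eq_zero_of_col_eq_smul (hμν : μ ≠ ν) (hμ : A.col μ = a • c)
    (hν : A.col ν = b • c) (u : n) {r : n → R} {t : R} (hrμ : r μ = a * t) (hrν : r ν = b * t) :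
    (A.updateRow u r).det = 0 := by
  apply det_eq_zero_of_col_eq_smul hμν (a := a) (b := b) (c := Function.update c u t)
  · rw [col_updateRow, hμ, hrμ, ← smul_eq_mul, Function.update_smul]
  · rw [col_updateRow, hν, hrν, ← smul_eq_mul, Function.update_smul]

/-- The left-hand side of the first identity is the determinant of `A` with row `u` replaced by
`a e_μ + b e_ν`, and `A.adjugate i u` is the one with row `u` replaced by `e_i`. Both replacements
keep the columns `μ` and `ν` proportional, with the same factors `a` and `b`. -/
theorem cofactor_relations_general (hμν : μ ≠ ν) (hμ : A.col μ = a • c) (hν : A.col ν = b • c)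
    (u : n) :
    a * A.adjugate μ u + b * A.adjugate ν u = 0 ∧
      ∀ i, i ≠ μ → i ≠ ν → A.adjugate i u = 0 := by
  constructor
  · rw [Matrix.adjugate_apply, Matrix.adjugate_apply, ← Matrix.det_updateRow_smul,
      ← Matrix.det_updateRow_smul, ← Matrix.det_updateRow_add]
    exact det_updateRow_eq_zero_of_col_eq_smul hμν hμ hν u (t := 1)
      (by simp [hμν]) (by simp [hμν.symm])
  · intro i hiμ hiν
    rw [Matrix.adjugate_apply]
    exact det_updateRow_eq_zero_of_col_eq_smul hμν hμ hν u (t := 0)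
      (by simp [hiμ.symm]) (by simp [hiν.symm])

end ProportionalColumns

theorem col_eq_smul_of_powerSum_jacobian {k : ℕ} {ι R : Type*} [CommSemiring R] {x m : ι → R}
    {M : Matrix (Fin k) ι R} (hM : ∀ j i, M j i = ((j : ℕ) + 1) * m i * x i ^ (j : ℕ)) (i : ι) :
    M.col i = m i • fun j : Fin k => ((j : ℕ) + 1) * x i ^ (j : ℕ) := by
  ext j
  simp only [Matrix.col_apply, hM, Pi.smul_apply, smul_eq_mul]
  ring

theorem cofactor_eq_adjugate {N' : ℕ} (M : Matrix (Fin (N' + 2)) (Fin (N' + 2)) ℝ)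
    (u i : Fin (N' + 2)) : cofactor M u i = M.adjugate i u :=
  (M.adjugate_fin_succ_eq_det_submatrix i u).symm

/-- Let `N = N' + 2 ≥ 2` and let `M` be the `N × N` matrix with entries
`M_{j,i} = j · m_i · x_i^{j−1}` (indices `0`-based, so row `j : Fin N` is row
`j+1`), with cofactors `A_{u,i}`.  If `μ ≠ ν` and `x_μ = x_ν`, then for every
`u` one has `m_μ · A_{u,μ} + m_ν · A_{u,ν} = 0`, and, provided `m_μ, m_ν` are
nonzero, `A_{u,i} = 0` for every `i ∉ {μ, ν}` (two proportional columns remain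
in the minor). -/
theorem cofactor_relations (N' : ℕ) (x m : Fin (N' + 2) → ℝ)
    (M : Matrix (Fin (N' + 2)) (Fin (N' + 2)) ℝ)
    (hM : ∀ j i, M j i = ((j : ℕ) + 1) * m i * x i ^ (j : ℕ))
    (μ ν : Fin (N' + 2)) (hμν : μ ≠ ν) (hx : x μ = x ν) :
    ∀ u : Fin (N' + 2),
      m μ * cofactor M u μ + m ν * cofactor M u ν = 0 ∧
      (m μ ≠ 0 → m ν ≠ 0 → ∀ i, i ≠ μ → i ≠ ν → cofactor M u i = 0) := by
  simp only [cofactor_eq_adjugate]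
  have relations := cofactor_relations_general hμν (col_eq_smul_of_powerSum_jacobian hM μ)
    (hx ▸ col_eq_smul_of_powerSum_jacobian hM ν)
  exact fun u => ⟨(relations u).1, fun _ _ => (relations u).2⟩
end
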